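/- A quasi-identity in the language {∧, ∨, ¬, 0, 1} is admissible in D₄ (equivalently, admissible in the variety of De Morgan algebras) if and only if it is valid in the 10-element De Morgan algebra D̄₄₂. -/

import Mathlib

/-!
Validity in the free De Morgan algebra on two generators `p, q` governs both directions.
Writing `A = (p ∧ ¬p) ∨ (q ∧ ¬q)` and `E = A ∧ ¬A`, the assignment `∅ ↦ E`,
`{x} ↦ E ∨ (p ∧ ¬p)`, `{y} ↦ E ∨ (q ∧ ¬q)`, `{z} ↦ ¬A` extends to an embedding of D̄₄₂ into
that free algebra: evaluating the terms `embTerm d` at a pair `(p, q)` of elements of D₄ gives a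
homomorphism `coordHom p q : D̄₄₂ → D₄` (`coordHom_meet`, `coordHom_join`, `coordHom_neg`), and
these homomorphisms jointly separate the points of D̄₄₂ (`coordHom_separates`); the pairs `(a, b)`,
`(0, 0)`, `(a, a)` would suffice for this.

* If a quasi-identity is admissible in D₄ and its premises hold at `v : ℕ → D̄₄₂`, then
  substituting `embTerm ∘ v` makes its premises valid in D₄, hence its conclusion; separation
  transfers the conclusion back to `v`.
* Conversely, D̄₄₂ embeds in a power of D₄, so it satisfies every identity valid in D₄, and
  `coordHom a b` maps it onto D₄, with a set-theoretic section `lift`. Hence if a substitution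
  validates the premises in D₄, it validates them in D̄₄₂; the conclusion then holds in D̄₄₂ at the
  lift of any assignment into D₄, and applying `coordHom a b` brings it down to D₄.
-/


/-- Terms in the language {∧, ∨, ¬, 0, 1} over a set `V` of variables. -/
inductive DMTerm (V : Type) : Type
  | var : V → DMTerm V
  | meet : DMTerm V → DMTerm V → DMTerm V
  | join : DMTerm V → DMTerm V → DMTerm V
  | neg : DMTerm V → DMTerm V
  | zero : DMTerm V
  | one : DMTerm V

/-- An algebra in the language {∧, ∨, ¬, 0, 1}. -/
structure DMAlg where
  carrier : Type
  meet : carrier → carrier → carrier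
  join : carrier → carrier → carrier
  neg : carrier → carrier
  zero : carrier
  one : carrier

/-- Evaluation of a term in an algebra under an assignment of the variables. -/
def DMTerm.eval {V : Type} (A : DMAlg) (v : V → A.carrier) : DMTerm V → A.carrier
  | .var x => v x
  | .meet t s => A.meet (t.eval A v) (s.eval A v)
  | .join t s => A.join (t.eval A v) (s.eval A v)
  | .neg t => A.neg (t.eval A v)
  | .zero => A.zero
  | .one => A.one

/-- Substitution of terms for variables. -/
def DMTerm.subst {V W : Type} (s : V → DMTerm W) : DMTerm V → DMTerm W
  | .var x => s x
  | .meet t u => .meet (t.subst s) (u.subst s)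
  | .join t u => .join (t.subst s) (u.subst s)
  | .neg t => .neg (t.subst s)
  | .zero => .zero
  | .one => .one

/-- Validity of the identity `φ ≈ ψ` in the algebra `A`. -/
def DMIdValid {V : Type} (A : DMAlg) (φ ψ : DMTerm V) : Prop :=
  ∀ v : V → A.carrier, φ.eval A v = ψ.eval A v

/-- Validity of the quasi-identity `Γ ⇒ φ ≈ ψ` in the algebra `A`. -/
def DMQValid (A : DMAlg) (Γ : List (DMTerm ℕ × DMTerm ℕ)) (φ ψ : DMTerm ℕ) : Prop :=
  ∀ v : ℕ → A.carrier,
    (∀ p ∈ Γ, p.1.eval A v = p.2.eval A v) → φ.eval A v = ψ.eval A v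

/-- Admissibility of the quasi-identity `Γ ⇒ φ ≈ ψ` in the algebra `M`. -/
def DMAdmissible (M : DMAlg) (Γ : List (DMTerm ℕ × DMTerm ℕ)) (φ ψ : DMTerm ℕ) : Prop :=
  ∀ s : ℕ → DMTerm ℕ,
    (∀ p ∈ Γ, DMIdValid M (p.1.subst s) (p.2.subst s)) →
    DMIdValid M (φ.subst s) (ψ.subst s)

/-- The four-element De Morgan algebra D₄: 0 < a, b < 1 with a, b incomparable. -/
inductive D4 : Type
  | z  -- 0
  | a
  | b
  | u  -- 1
deriving DecidableEq

def D4.meet : D4 → D4 → D4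
  | .z, _ => .z
  | _, .z => .z
  | .u, y => y
  | x, .u => x
  | .a, .a => .a
  | .b, .b => .b
  | .a, .b => .z
  | .b, .a => .z

def D4.join : D4 → D4 → D4
  | .u, _ => .u
  | _, .u => .u
  | .z, y => y
  | x, .z => x
  | .a, .a => .a
  | .b, .b => .b
  | .a, .b => .u
  | .b, .a => .u

def D4.neg : D4 → D4
  | .z => .u
  | .u => .z
  | .a => .a
  | .b => .b

def D4alg : DMAlg :=
  ⟨D4, D4.meet, D4.join, D4.neg, D4.z, D4.u⟩

/-- Carrier of the ten-element De Morgan algebra D̄₄₂: the subsets of a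
three-element set {x, y, z} (here `Fin 3` with x = 0, y = 1, z = 2) together
with a new bottom (`none`) and a new top (`some none`). -/
abbrev D42c : Type := Option (Option (Finset (Fin 3)))

def D42meet : D42c → D42c → D42c
  | none, _ => none
  | _, none => none
  | some none, y => y
  | x, some none => x
  | some (some s), some (some t) => some (some (s ∩ t))

def D42join : D42c → D42c → D42c
  | some none, _ => some none
  | _, some none => some none
  | none, y => y
  | x, none => x
  | some (some s), some (some t) => some (some (s ∪ t))

/-- Negation on D̄₄₂: ¬0 = 1, ¬1 = 0, and ¬S = {x,y,z} ∖ τ(S) where τ swaps x, y. -/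
def D42neg : D42c → D42c
  | none => some none
  | some none => none
  | some (some s) => some (some (s.image (⇑(Equiv.swap (0 : Fin 3) 1)))ᶜ)

def D42alg : DMAlg :=
  ⟨D42c, D42meet, D42join, D42neg, none, some none⟩

instance : Fintype D4 := ⟨{.z, .a, .b, .u}, by intro x; cases x <;> decide⟩

/-- The term, in the variables `0` and `1`, that represents `d` under the embedding of D̄₄₂ into
the free De Morgan algebra on two generators. A subset `S` goes to the join of the image of `∅`
with one term for each element of `S`. -/
def embTerm : D42c → DMTerm ℕ
  | none => .zero
  | some none => .one
  | some (some s) =>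
    let P : DMTerm ℕ := .meet (.var 0) (.neg (.var 0))
    let Q : DMTerm ℕ := .meet (.var 1) (.neg (.var 1))
    let A : DMTerm ℕ := .join P Q
    .join (.meet A (.neg A))
      (.join (if 0 ∈ s then P else .zero)
        (.join (if 1 ∈ s then Q else .zero) (if 2 ∈ s then .neg A else .zero)))

/-- The map D̄₄₂ → D₄ obtained by evaluating `embTerm` at `(p, q)`, computed directly in D₄. -/
def coordHom (p q : D4) : D42c → D4
  | none => .z
  | some none => .u
  | some (some s) =>
    let P := D4.meet p (D4.neg p)
    let Q := D4.meet q (D4.neg q)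
    let A := D4.join P Q
    D4.join (D4.meet A (D4.neg A))
      (D4.join (if 0 ∈ s then P else .z)
        (D4.join (if 1 ∈ s then Q else .z) (if 2 ∈ s then D4.neg A else .z)))

theorem eval_embTerm (w : ℕ → D4) (d : D42c) :
    (embTerm d).eval D4alg w = coordHom (w 0) (w 1) d := by
  match d with
  | none => rfl
  | some none => rfl
  | some (some s) =>
    by_cases h0 : (0 : Fin 3) ∈ s <;> by_cases h1 : (1 : Fin 3) ∈ s <;>
      by_cases h2 : (2 : Fin 3) ∈ s <;>
      simp only [embTerm, coordHom, h0, h1, h2, if_true, if_false] <;> rfl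

theorem coordHom_meet (p q : D4) :
    ∀ d e : D42c, coordHom p q (D42meet d e) = D4.meet (coordHom p q d) (coordHom p q e) := by
  cases p <;> cases q <;> decide +kernel

theorem coordHom_join (p q : D4) :
    ∀ d e : D42c, coordHom p q (D42join d e) = D4.join (coordHom p q d) (coordHom p q e) := by
  cases p <;> cases q <;> decide +kernel

theorem coordHom_neg (p q : D4) :
    ∀ d : D42c, coordHom p q (D42neg d) = D4.neg (coordHom p q d) := by
  cases p <;> cases q <;> decide +kernel

theorem coordHom_separates :
    ∀ d e : D42c, (∀ p q : D4, coordHom p q d = coordHom p q e) → d = e := by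
  decide +kernel

theorem eval_coordHom (p q : D4) (v : ℕ → D42c) (t : DMTerm ℕ) :
    coordHom p q (t.eval D42alg v) = t.eval D4alg (fun n => coordHom p q (v n)) := by
  induction t with
  | var n => rfl
  | meet t u iht ihu =>
    exact (coordHom_meet p q _ _).trans (congrArg₂ D4.meet iht ihu)
  | join t u iht ihu =>
    exact (coordHom_join p q _ _).trans (congrArg₂ D4.join iht ihu)
  | neg t ih => exact (coordHom_neg p q _).trans (congrArg D4.neg ih)
  | zero => rfl
  | one => rfl

theorem eval_subst (M : DMAlg) (s : ℕ → DMTerm ℕ) (v : ℕ → M.carrier) (t : DMTerm ℕ) :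
    (t.subst s).eval M v = t.eval M (fun n => (s n).eval M v) := by
  induction t <;> simp_all [DMTerm.subst, DMTerm.eval]

/-- Identities of D₄ hold in D̄₄₂, since the maps `coordHom p q` embed D̄₄₂ in a power of D₄. -/
theorem D42_idValid_of_D4 {t u : DMTerm ℕ} (h : DMIdValid D4alg t u) : DMIdValid D42alg t u := by
  intro v
  refine coordHom_separates _ _ fun p q => ?_
  exact (eval_coordHom p q v t).trans ((h _).trans (eval_coordHom p q v u).symm)

/-- A set-theoretic section of the surjection `coordHom a b`. -/
def lift : D4 → D42c
  | .z => none
  | .a => some (some {0})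
  | .b => some (some {1})
  | .u => some none

theorem coordHom_lift : ∀ c : D4, coordHom .a .b (lift c) = c := by decide +kernel

/-- Substituting `embTerm ∘ v` and evaluating in D₄ is the same as evaluating at `v` in D̄₄₂ and
applying a coordinate homomorphism. -/
theorem eval_subst_embTerm (v : ℕ → D42c) (w : ℕ → D4) (t : DMTerm ℕ) :
    (t.subst (fun n => embTerm (v n))).eval D4alg w =
      coordHom (w 0) (w 1) (t.eval D42alg v) := by
  refine (eval_subst D4alg _ w t).trans (Eq.trans ?_ (eval_coordHom _ _ v t).symm)
  exact congrArg (fun f => t.eval D4alg f) (funext fun n => eval_embTerm w (v n))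

theorem statement4 (Γ : List (DMTerm ℕ × DMTerm ℕ)) (φ ψ : DMTerm ℕ) :
    DMAdmissible D4alg Γ φ ψ ↔ DMQValid D42alg Γ φ ψ := by
  constructor
  · intro h v hv
    have key := h (fun n => embTerm (v n)) fun p hp w =>
      (eval_subst_embTerm v w p.1).trans
        ((congrArg (coordHom (w 0) (w 1)) (hv p hp)).trans (eval_subst_embTerm v w p.2).symm)
    refine coordHom_separates _ _ fun p q => ?_
    let w : ℕ → D4 := fun n => if n = 0 then p else q
    exact (eval_subst_embTerm v w φ).symm.trans ((key w).trans (eval_subst_embTerm v w ψ))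
  · intro h s hs w
    let v : ℕ → D42c := fun k => lift (w k)
    have key : (φ.subst s).eval D42alg v = (ψ.subst s).eval D42alg v :=
      (eval_subst D42alg s v φ).trans <| (h _ fun p hp =>
        (eval_subst D42alg s v p.1).symm.trans
          ((D42_idValid_of_D4 (hs p hp) v).trans (eval_subst D42alg s v p.2))).trans
        (eval_subst D42alg s v ψ).symm
    have hw : (fun n => coordHom .a .b (v n)) = w := funext fun n => coordHom_lift (w n)
    have down (t : DMTerm ℕ) : coordHom .a .b (t.eval D42alg v) = t.eval D4alg w :=
      (eval_coordHom .a .b v t).trans (congrArg (fun f => t.eval D4alg f) hw)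
    exact (down _).symm.trans ((congrArg (coordHom .a .b) key).trans (down _))
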